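/- arXiv:2505.09174 — 2 statements merged into one kernel-verified Lean document; each statement's English description precedes it below -/
import Mathlib

section
/- Suppose the commutative diagram of topological spaces with maps f : A → Y, closed cofibration i : A ↪ X, f' : A' → Y', closed cofibration i' : A' ↪ X', and vertical homotopy equivalences φ_X : X → X', φ_A : A → A', φ_Y : Y → Y' satisfying φ_Y ∘ f = f' ∘ φ_A and φ_X ∘ i = i' ∘ φ_A. Then the induced map φ : X ∪_f Y → X' ∪_{f'} Y' on adjunction spaces is a homotopy equivalence. -/
open ContinuousMap

/-- The homotopy extension property for a map `i : A → X` with respect to all spaces. -/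
def HasHEP {A X : Type} [TopologicalSpace A] [TopologicalSpace X] (i : A → X) : Prop :=
  ∀ (Z : Type) (_ : TopologicalSpace Z) (h : C(X, Z)) (H : C(A × unitInterval, Z)),
    (∀ a, H (a, 0) = h (i a)) →
      ∃ G : C(X × unitInterval, Z), (∀ x, G (x, 0) = h x) ∧ ∀ a t, G (i a, t) = H (a, t)

/-- A closed cofibration: a closed embedding with the homotopy extension property. -/
def IsClosedCofibration {A X : Type} [TopologicalSpace A] [TopologicalSpace X]
    (i : A → X) : Prop :=
  Topology.IsClosedEmbedding i ∧ HasHEP i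

/-- The relation on `X ⊕ Y` generating the adjunction space `X ∪_f Y` along `i : A → X`,
`f : A → Y`. -/
def adjRelG {A X Y : Type} (i : A → X) (f : A → Y) : X ⊕ Y → X ⊕ Y → Prop :=
  fun p q => ∃ a : A, p = Sum.inl (i a) ∧ q = Sum.inr (f a)

/-- The adjunction space `X ∪_f Y` with the quotient topology. -/
abbrev AdjSpace {A X Y : Type} [TopologicalSpace X] [TopologicalSpace Y]
    (i : A → X) (f : A → Y) : Type := Quot (adjRelG i f)

/-- The map `X ∪_f Y → X' ∪_{f'} Y'` induced by `φ_X, φ_A, φ_Y` on a commutative diagram. -/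
def adjInducedMap {A X Y A' X' Y' : Type} [TopologicalSpace X] [TopologicalSpace Y]
    [TopologicalSpace X'] [TopologicalSpace Y']
    (i : A → X) (f : A → Y) (i' : A' → X') (f' : A' → Y')
    (φX : X → X') (φA : A → A') (φY : Y → Y')
    (hcX : ∀ a, φX (i a) = i' (φA a)) (hcY : ∀ a, φY (f a) = f' (φA a)) :
    AdjSpace i f → AdjSpace i' f' :=
  Quot.map (Sum.map φX φY)
    (by
      rintro p q ⟨a, rfl, rfl⟩
      exact ⟨φA a, by simp [Sum.map, hcX a], by simp [Sum.map, hcY a]⟩)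

/-- A continuous map is a homotopy equivalence if it has a homotopy inverse. -/
def IsHomotopyEquivMap {P Q : Type} [TopologicalSpace P] [TopologicalSpace Q]
    (g : C(P, Q)) : Prop :=
  ∃ k : C(Q, P), (k.comp g).Homotopic (ContinuousMap.id P) ∧
    (g.comp k).Homotopic (ContinuousMap.id Q)

namespace GluingAux

open CategoryTheory CategoryTheory.Limits

theorem hep_prod {A X : Type} [TopologicalSpace A] [TopologicalSpace X] (i : C(A, X))
    (hi : HasHEP i) (Z : Type) [TopologicalSpace Z] (h : C(X × unitInterval, Z))
    (H : C((A × unitInterval) × unitInterval, Z))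
    (h0 : ∀ a s, H ((a, s), 0) = h (i a, s)) :
    ∃ L : C((X × unitInterval) × unitInterval, Z),
      (∀ x s, L ((x, s), 0) = h (x, s)) ∧ ∀ a s t, L ((i a, s), t) = H ((a, s), t) := by
  let H' : C((A × unitInterval) × unitInterval, Z) :=
    ⟨fun p => H ((p.1.1, p.2), p.1.2), by fun_prop⟩
  obtain ⟨G, hG0, hG1⟩ := hi C(unitInterval, Z) inferInstance h.curry H'.curry (by
    intro a; ext s; simpa [H'] using h0 a s)
  refine ⟨⟨fun p => G (p.1.1, p.2) p.1.2, by fun_prop⟩, ?_, ?_⟩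
  · intro x s
    simp [hG0]
  · intro a s t
    simp [hG1, H']

theorem rel_precomp {W X Z : Type} [TopologicalSpace W] [TopologicalSpace X] [TopologicalSpace Z]
    {u v : C(X, Z)} {S : Set X} (h : u.HomotopicRel v S) (k : C(W, X)) (T : Set W)
    (hk : ∀ w ∈ T, k w ∈ S) : (u.comp k).HomotopicRel (v.comp k) T := by
  obtain ⟨H⟩ := h
  exact ⟨{ toFun := fun p => H (p.1, k p.2)
           continuous_toFun := by fun_prop
           map_zero_left := by simp
           map_one_left := by simp
           prop' := fun t w hw => by simpa using H.eq_fst t (hk w hw) }⟩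

/-- A homotopy given as a map out of `X × I`. -/
theorem rel_of_map {X Z : Type} [TopologicalSpace X] [TopologicalSpace Z]
    {u v : C(X, Z)} {S : Set X} (F : C(X × unitInterval, Z)) (h0 : ∀ x, F (x, 0) = u x)
    (h1 : ∀ x, F (x, 1) = v x) (hS : ∀ x ∈ S, ∀ t, F (x, t) = u x) :
    u.HomotopicRel v S :=
  ⟨{ toFun := fun p => F (p.2, p.1)
     continuous_toFun := by fun_prop
     map_zero_left := h0
     map_one_left := h1
     prop' := fun t w hw => hS w hw t }⟩

theorem hom_of_map {X Z : Type} [TopologicalSpace X] [TopologicalSpace Z]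
    {u v : C(X, Z)} (F : C(X × unitInterval, Z)) (h0 : ∀ x, F (x, 0) = u x)
    (h1 : ∀ x, F (x, 1) = v x) : u.Homotopic v :=
  (rel_of_map (S := ∅) F h0 h1 (by simp)).homotopic

theorem dold_self {A X : Type} [TopologicalSpace A] [TopologicalSpace X] (i : C(A, X))
    (hi : HasHEP i) (e : C(X, X)) (he : ∀ a, e (i a) = i a)
    (h : e.Homotopic (ContinuousMap.id X)) :
    ∃ e' : C(X, X), (∀ a, e' (i a) = i a) ∧
      (e'.comp e).HomotopicRel (ContinuousMap.id X) (Set.range i) := by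
  obtain ⟨H⟩ := h
  obtain ⟨G, hG0, hG1⟩ := hi X inferInstance (ContinuousMap.id X)
    ⟨fun p => H (p.2, i p.1), by fun_prop⟩ (by intro a; simp [he])
  simp only [ContinuousMap.coe_mk, ContinuousMap.id_apply] at hG0 hG1
  let e' : C(X, X) := ⟨fun x => G (x, 1), by fun_prop⟩
  have he' : ∀ a, e' (i a) = i a := by
    intro a
    simp [e', hG1]
  refine ⟨e', he', ?_⟩
  let K : ContinuousMap.Homotopy e (e'.comp e) :=
    { toFun := fun p => G (e p.2, p.1)
      continuous_toFun := by fun_prop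
      map_zero_left := by simp [hG0]
      map_one_left := by simp [e'] }
  have hK : ∀ t a, K (t, i a) = H (t, i a) := by
    intro t a
    show G (e (i a), t) = _
    rw [he, hG1]
  let F := K.symm.trans H
  let ab : C(unitInterval, unitInterval) :=
    ⟨fun s => ⟨|2 * (s : ℝ) - 1|, abs_nonneg _, by
      have h0 := s.2.1
      have h1 := s.2.2
      rw [abs_le]; constructor <;> linarith⟩, by fun_prop⟩
  have hF : ∀ s a, F (s, i a) = H (ab s, i a) := by
    intro s a
    simp only [F, ContinuousMap.Homotopy.trans_apply]
    split_ifs with hs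
    · rw [ContinuousMap.Homotopy.symm_apply, hK]
      congr 2
      apply Subtype.ext
      simp only [ab, ContinuousMap.coe_mk, unitInterval.coe_symm_eq]
      rw [abs_of_nonpos (by linarith)]
      ring
    · congr 2
      apply Subtype.ext
      simp only [ab, ContinuousMap.coe_mk]
      rw [abs_of_nonneg (by linarith)]
  obtain ⟨L, hL0, hL1⟩ := hep_prod i hi X ⟨fun p => F (p.2, p.1), by fun_prop⟩
    ⟨fun p => H (max (ab p.1.2) p.2, i p.1.1), by fun_prop⟩ (by
      intro a s
      simp [hF])
  simp only [ContinuousMap.coe_mk] at hL0 hL1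
  have ab0 : ab 0 = 1 := by apply Subtype.ext; simp [ab]
  have ab1 : ab 1 = 1 := by
    apply Subtype.ext; simp only [ab, ContinuousMap.coe_mk, Set.Icc.coe_one]; norm_num
  have m1 : ∀ t : unitInterval, max 1 t = 1 := fun t => max_eq_left t.2.2
  have m2 : ∀ t : unitInterval, max t 1 = 1 := fun t => max_eq_right t.2.2
  have s1 : (e'.comp e).HomotopicRel ⟨fun x => L ((x, 0), 1), by fun_prop⟩ (Set.range i) := by
    refine rel_of_map ⟨fun p => L ((p.1, 0), p.2), by fun_prop⟩ ?_ ?_ ?_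
    · intro x; simp [hL0]
    · intro x; simp
    · rintro _ ⟨a, rfl⟩ t
      simp [hL1, ab0, m1, he, he']
  have s2 : ContinuousMap.HomotopicRel (⟨fun x => L ((x, 0), 1), by fun_prop⟩ : C(X, X))
      ⟨fun x => L ((x, 1), 1), by fun_prop⟩ (Set.range i) := by
    refine rel_of_map ⟨fun p => L ((p.1, p.2), 1), by fun_prop⟩ ?_ ?_ ?_
    · intro x; simp
    · intro x; simp
    · rintro _ ⟨a, rfl⟩ t
      simp [hL1, m2]
  have s3 : (ContinuousMap.id X).HomotopicRel ⟨fun x => L ((x, 1), 1), by fun_prop⟩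
      (Set.range i) := by
    refine rel_of_map ⟨fun p => L ((p.1, 1), p.2), by fun_prop⟩ ?_ ?_ ?_
    · intro x; simp [hL0]
    · intro x; simp
    · rintro _ ⟨a, rfl⟩ t
      simp [hL1, ab1, m1]
  exact (s1.trans s2).trans s3.symm

theorem dold_left {A X X' : Type} [TopologicalSpace A] [TopologicalSpace X] [TopologicalSpace X']
    (i : C(A, X)) (hi : HasHEP i) (i' : C(A, X')) (hi' : HasHEP i') (g : C(X, X'))
    (hg : ∀ a, g (i a) = i' a) (k₀ : C(X', X))
    (h : (k₀.comp g).Homotopic (ContinuousMap.id X)) :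
    ∃ k : C(X', X), (∀ a, k (i' a) = i a) ∧
      (k.comp g).HomotopicRel (ContinuousMap.id X) (Set.range i) := by
  obtain ⟨H⟩ := id h
  obtain ⟨G, hG0, hG1⟩ := hi' X inferInstance k₀
    ⟨fun p => H (p.2, i p.1), by fun_prop⟩ (by intro a; simp [hg])
  simp only [ContinuousMap.coe_mk] at hG1
  let k : C(X', X) := ⟨fun x => G (x, 1), by fun_prop⟩
  have hk : ∀ a, k (i' a) = i a := by intro a; simp [k, hG1]
  have hkk : k₀.Homotopic k := hom_of_map G hG0 (fun _ => rfl)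
  obtain ⟨e', he', hr⟩ := dold_self i hi (k.comp g) (by intro a; simp [hg, hk])
    ((hkk.symm.comp (.refl g)).trans h)
  exact ⟨e'.comp k, by intro a; simp [hk, he'], hr⟩

theorem dold {A X X' : Type} [TopologicalSpace A] [TopologicalSpace X] [TopologicalSpace X']
    (i : C(A, X)) (hi : HasHEP i) (i' : C(A, X')) (hi' : HasHEP i') (g : C(X, X'))
    (hg : ∀ a, g (i a) = i' a) (he : IsHomotopyEquivMap g) :
    ∃ k : C(X', X), (∀ a, k (i' a) = i a) ∧
      (k.comp g).HomotopicRel (ContinuousMap.id X) (Set.range i) ∧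
      (g.comp k).HomotopicRel (ContinuousMap.id X') (Set.range i') := by
  obtain ⟨k₀, h1, h2⟩ := he
  obtain ⟨k, hk, hkg⟩ := dold_left i hi i' hi' g hg k₀ h1
  have hkk : k₀.Homotopic k := by
    have a1 : k₀.Homotopic ((k.comp g).comp k₀) := (hkg.homotopic.symm.comp (.refl k₀))
    exact a1.trans ((ContinuousMap.Homotopic.refl k).comp h2)
  have hgk : (g.comp k).Homotopic (ContinuousMap.id X') :=
    ((ContinuousMap.Homotopic.refl g).comp hkk.symm).trans h2
  obtain ⟨g', hg', hgk'⟩ := dold_left i' hi' i hi k hk g hgk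
  refine ⟨k, hk, hkg, ?_⟩
  have b1 : (g.comp k).HomotopicRel ((g'.comp k).comp (g.comp k)) (Set.range i') :=
    rel_precomp hgk'.symm (g.comp k) _ (by rintro _ ⟨a, rfl⟩; exact ⟨a, by simp [hk, hg]⟩)
  have b2 : (g'.comp ((k.comp g).comp k)).HomotopicRel (g'.comp k) (Set.range i') :=
    (rel_precomp hkg k _ (by rintro _ ⟨a, rfl⟩; exact ⟨a, by simp [hk]⟩)).comp_continuousMap g'
  exact (b1.trans b2).trans hgk'


theorem he_id (X : TopCat.{0}) : IsHomotopyEquivMap (𝟙 X : X ⟶ X).hom :=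
  ⟨ContinuousMap.id X, .refl _, .refl _⟩

theorem he_comp {X Y Z : TopCat.{0}} (f : X ⟶ Y) (g : Y ⟶ Z) (hf : IsHomotopyEquivMap f.hom)
    (hg : IsHomotopyEquivMap g.hom) : IsHomotopyEquivMap (f ≫ g).hom := by
  obtain ⟨a, ha1, ha2⟩ := hf
  obtain ⟨b, hb1, hb2⟩ := hg
  refine ⟨a.comp b, ?_, ?_⟩
  · have : (a.comp ((b.comp g.hom).comp f.hom)).Homotopic (a.comp f.hom) :=
      (ContinuousMap.Homotopic.refl a).comp (hb1.comp (.refl f.hom))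
    exact this.trans ha1
  · have : (g.hom.comp ((f.hom.comp a).comp b)).Homotopic (g.hom.comp b) :=
      (ContinuousMap.Homotopic.refl g.hom).comp (ha2.comp (.refl b))
    exact this.trans hb2

theorem he_of_left {X Y Z : TopCat.{0}} (f : X ⟶ Y) (g : Y ⟶ Z) (hf : IsHomotopyEquivMap f.hom)
    (hg : IsHomotopyEquivMap (f ≫ g).hom) : IsHomotopyEquivMap g.hom := by
  obtain ⟨a, ha1, ha2⟩ := hf
  obtain ⟨b, hb1, hb2⟩ := hg
  refine ⟨f.hom.comp b, ?_, hb2⟩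
  have c1 : ((f.hom.comp (b.comp g.hom)).comp (f.hom.comp a)).Homotopic
      (f.hom.comp (b.comp g.hom)) :=
    (ContinuousMap.Homotopic.refl (f.hom.comp (b.comp g.hom))).comp ha2
  have c2 : (f.hom.comp ((b.comp (f ≫ g).hom).comp a)).Homotopic (f.hom.comp a) :=
    (ContinuousMap.Homotopic.refl f.hom).comp (hb1.comp (.refl a))
  exact (c1.symm.trans c2).trans ha2

theorem he_of_right {X Y Z : TopCat.{0}} (f : X ⟶ Y) (g : Y ⟶ Z) (hf : IsHomotopyEquivMap g.hom)
    (hg : IsHomotopyEquivMap (f ≫ g).hom) : IsHomotopyEquivMap f.hom := by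
  obtain ⟨a, ha1, ha2⟩ := hf
  obtain ⟨b, hb1, hb2⟩ := hg
  refine ⟨b.comp g.hom, hb1, ?_⟩
  have c1 : ((a.comp g.hom).comp (f.hom.comp (b.comp g.hom))).Homotopic
      (f.hom.comp (b.comp g.hom)) :=
    ha1.comp (.refl (f.hom.comp (b.comp g.hom)))
  have c2 : (a.comp (((f ≫ g).hom.comp b).comp g.hom)).Homotopic (a.comp g.hom) :=
    (ContinuousMap.Homotopic.refl a).comp (hb2.comp (.refl g.hom))
  exact (c1.symm.trans c2).trans ha1


/-- The free path space. -/
abbrev PS (Z : TopCat.{0}) : TopCat.{0} := TopCat.of C(unitInterval, Z)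

/-- Evaluation at a time. -/
def ev (Z : TopCat.{0}) (t : unitInterval) : PS Z ⟶ Z :=
  TopCat.ofHom ⟨fun γ => γ t, by fun_prop⟩

@[simp] theorem ev_apply (Z : TopCat.{0}) (t : unitInterval) (γ : C(unitInterval, Z)) :
    ev Z t γ = γ t := rfl

/-- Constant paths. -/
def cst (Z : TopCat.{0}) : Z ⟶ PS Z :=
  TopCat.ofHom ⟨fun z => ContinuousMap.const _ z, ContinuousMap.continuous_const'⟩

@[simp] theorem cst_apply (Z : TopCat.{0}) (z : Z) (t : unitInterval) :
    (cst Z z : C(unitInterval, Z)) t = z := rfl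

theorem cst_ev (Z : TopCat.{0}) (t : unitInterval) : cst Z ≫ ev Z t = 𝟙 Z := rfl

/-- Cofibrations, as a lifting property. -/
def Cof {A X : TopCat.{0}} (i : A ⟶ X) : Prop :=
  ∀ (Z : TopCat.{0}) (h : X ⟶ Z) (H : A ⟶ PS Z), H ≫ ev Z 0 = i ≫ h →
    ∃ G : X ⟶ PS Z, G ≫ ev Z 0 = h ∧ i ≫ G = H

theorem cof_of_hep {A X : TopCat.{0}} (i : A ⟶ X) (hi : HasHEP i.hom) : Cof i := by
  intro Z h H hH
  obtain ⟨G, h0, h1⟩ := hi Z inferInstance h.hom ⟨fun p => (H.hom p.1 : C(unitInterval, Z)) p.2,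
    by fun_prop⟩ (fun a => ConcreteCategory.congr_hom hH a)
  refine ⟨TopCat.ofHom G.curry, ?_, ?_⟩
  · ext x; exact h0 x
  · ext a t
    exact h1 a t

theorem hep_of_cof {A X : TopCat.{0}} (i : A ⟶ X) (hi : Cof i) : HasHEP i.hom := by
  intro Z _ h H hH
  obtain ⟨G, h0, h1⟩ := hi (TopCat.of Z) (TopCat.ofHom h) (TopCat.ofHom H.curry)
    (by ext a; exact hH a)
  refine ⟨⟨fun p => (G.hom p.1 : C(unitInterval, Z)) p.2, by fun_prop⟩, ?_, ?_⟩
  · intro x; exact ConcreteCategory.congr_hom h0 x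
  · intro a t
    exact DFunLike.congr_fun (ConcreteCategory.congr_hom h1 a : (_ : C(unitInterval, Z)) = _) t

theorem cof_id (A : TopCat.{0}) : Cof (𝟙 A) := by
  intro Z h H hH
  exact ⟨H, by simpa using hH, by simp⟩

theorem cof_pushout {A X Y P : TopCat.{0}} {i : A ⟶ X} {f : A ⟶ Y} {inl : X ⟶ P} {inr : Y ⟶ P}
    (hP : IsPushout i f inl inr) (hi : Cof i) : Cof inr := by
  intro Z h H hH
  obtain ⟨G, h0, h1⟩ := hi Z (inl ≫ h) (f ≫ H) (by rw [Category.assoc, hH, hP.w_assoc])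
  refine ⟨hP.desc G H h1, ?_, by simp⟩
  apply hP.hom_ext
  · simp [h0]
  · simp [hH]

theorem pushout_htpy {A X Y P Z : TopCat.{0}} {i : A ⟶ X} {f : A ⟶ Y} {inl : X ⟶ P}
    {inr : Y ⟶ P} (hP : IsPushout i f inl inr) (w w' : P ⟶ Z)
    (hl : (inl ≫ w).hom.HomotopicRel (inl ≫ w').hom (Set.range i.hom))
    (hr : inr ≫ w = inr ≫ w') : w.hom.Homotopic w'.hom := by
  obtain ⟨H⟩ := hl
  let K : X ⟶ PS Z := TopCat.ofHom (ContinuousMap.curry ⟨fun p => H (p.2, p.1), by fun_prop⟩)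
  have hK : i ≫ K = f ≫ inr ≫ w ≫ cst Z := by
    rw [← hP.w_assoc]
    ext a t
    exact H.eq_fst t ⟨a, rfl⟩
  let D := hP.desc K (inr ≫ w ≫ cst Z) hK
  have hlD : inl ≫ D = K := hP.inl_desc _ _ _
  have hrD : inr ≫ D = inr ≫ w ≫ cst Z := hP.inr_desc _ _ _
  have h0 : D ≫ ev Z 0 = w := by
    apply hP.hom_ext
    · rw [reassoc_of% hlD]
      ext x
      exact H.apply_zero x
    · rw [reassoc_of% hrD, cst_ev, Category.comp_id]
  have h1 : D ≫ ev Z 1 = w' := by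
    apply hP.hom_ext
    · rw [reassoc_of% hlD]
      ext x
      exact H.apply_one x
    · rw [reassoc_of% hrD, cst_ev, Category.comp_id, hr]
  refine hom_of_map ⟨fun p => (D.hom p.1 : C(unitInterval, Z)) p.2, by fun_prop⟩ ?_ ?_
  · intro x; exact ConcreteCategory.congr_hom h0 x
  · intro x; exact ConcreteCategory.congr_hom h1 x

theorem glue_under {A X X' Y P P' : TopCat.{0}} {i : A ⟶ X} {i' : A ⟶ X'} {f : A ⟶ Y}
    {inl : X ⟶ P} {inr : Y ⟶ P} {inl' : X' ⟶ P'} {inr' : Y ⟶ P'}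
    (hP : IsPushout i f inl inr) (hP' : IsPushout i' f inl' inr')
    (hi : Cof i) (hi' : Cof i') (g : X ⟶ X') (hg : i ≫ g = i') (he : IsHomotopyEquivMap g.hom)
    (φ : P ⟶ P') (hl : inl ≫ φ = g ≫ inl') (hr : inr ≫ φ = inr') :
    IsHomotopyEquivMap φ.hom := by
  obtain ⟨k, hk, h1, h2⟩ := dold i.hom (hep_of_cof i hi) i'.hom (hep_of_cof i' hi') g.hom
    (fun a => ConcreteCategory.congr_hom hg a) he
  have hk' : i' ≫ TopCat.ofHom k = i := by ext a; exact hk a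
  let ψ : P' ⟶ P := hP'.desc (TopCat.ofHom k ≫ inl) inr (by rw [reassoc_of% hk', hP.w])
  have hlψ : inl' ≫ ψ = TopCat.ofHom k ≫ inl := hP'.inl_desc _ _ _
  have hrψ : inr' ≫ ψ = inr := hP'.inr_desc _ _ _
  refine ⟨ψ.hom, ?_, ?_⟩
  · refine pushout_htpy hP (φ ≫ ψ) (𝟙 P) ?_ ?_
    · rw [reassoc_of% hl, hlψ, Category.comp_id]
      exact h1.comp_continuousMap inl.hom
    · rw [reassoc_of% hr, hrψ, Category.comp_id]
  · refine pushout_htpy hP' (ψ ≫ φ) (𝟙 P') ?_ ?_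
    · rw [reassoc_of% hlψ, hl, Category.comp_id]
      exact h2.comp_continuousMap inl'.hom
    · rw [reassoc_of% hrψ, hr, Category.comp_id]

/-- Trivial cofibrations are stable under pushout. -/
theorem triv_cof {A V W Q : TopCat.{0}} {j : A ⟶ V} {i : A ⟶ W} {inl : V ⟶ Q} {inr : W ⟶ Q}
    (hQ : IsPushout j i inl inr) (hj : Cof j) (he : IsHomotopyEquivMap j.hom) :
    IsHomotopyEquivMap inr.hom :=
  glue_under (IsPushout.id_horiz i) hQ (cof_id A) hj j (by simp) he inr hQ.w.symm (by simp)


/-- The cylinder. -/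
abbrev Cyl (Y : TopCat.{0}) : TopCat.{0} := TopCat.of (Y × unitInterval)

/-- Inclusion of a slice. -/
def sl (Y : TopCat.{0}) (t : unitInterval) : Y ⟶ Cyl Y :=
  TopCat.ofHom ⟨fun y => (y, t), by fun_prop⟩

/-- Projection of the cylinder. -/
def cpr (Y : TopCat.{0}) : Cyl Y ⟶ Y := TopCat.ofHom ⟨fun p => p.1, by fun_prop⟩

/-- Flip of the cylinder. -/
def cfl (Y : TopCat.{0}) : Cyl Y ⟶ Cyl Y :=
  TopCat.ofHom ⟨fun p => (p.1, unitInterval.symm p.2), by fun_prop⟩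

theorem sl_cpr (Y : TopCat.{0}) (t : unitInterval) : sl Y t ≫ cpr Y = 𝟙 Y := rfl
theorem cfl_cfl (Y : TopCat.{0}) : cfl Y ≫ cfl Y = 𝟙 _ := by
  ext p <;> simp [cfl]
theorem sl0_cfl (Y : TopCat.{0}) : sl Y 0 ≫ cfl Y = sl Y 1 := by
  ext p <;> simp [cfl, sl]
theorem sl1_cfl (Y : TopCat.{0}) : sl Y 1 ≫ cfl Y = sl Y 0 := by
  ext p <;> simp [cfl, sl]

theorem he_cpr (Y : TopCat.{0}) : IsHomotopyEquivMap (cpr Y).hom := by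
  refine ⟨(sl Y 0).hom, ?_, .refl _⟩
  refine hom_of_map (X := Y × unitInterval) (Z := Y × unitInterval)
    ⟨fun p => (p.1.1, p.2 * p.1.2), by fun_prop⟩ ?_ ?_
  · intro x; simp [sl, cpr]
  · intro x; simp

theorem he_sl (Y : TopCat.{0}) (t : unitInterval) : IsHomotopyEquivMap (sl Y t).hom :=
  he_of_right _ (cpr Y) (he_cpr Y) (by rw [sl_cpr]; exact he_id Y)

theorem cyl_ext0 (Y Z : TopCat.{0}) (h : Cyl Y ⟶ Z) (H : Y ⟶ PS Z)
    (hH : H ≫ ev Z 0 = sl Y 0 ≫ h) :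
    ∃ G : Cyl Y ⟶ PS Z, G ≫ ev Z 0 = h ∧ sl Y 0 ≫ G = H ∧ sl Y 1 ≫ G = sl Y 1 ≫ h ≫ cst Z := by
  have hH' : ∀ y, (H y : C(unitInterval, Z)) 0 = h (y, 0) :=
    fun y => ConcreteCategory.congr_hom hH y
  let r : (Y × unitInterval) × unitInterval → ℝ := fun p => (1 - p.1.2) * p.2 - p.1.2
  have hr : Continuous r := by fun_prop
  let c : (Y × unitInterval) × unitInterval → Z := fun p =>
    if 0 ≤ r p then (H.hom p.1.1 : C(unitInterval, Z)) (Set.projIcc 0 1 zero_le_one (r p))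
    else h.hom (p.1.1, Set.projIcc 0 1 zero_le_one (-r p))
  have hc : Continuous c := by
    refine Continuous.if_le ?_ ?_ continuous_const hr ?_
    · have : Continuous fun p => Set.projIcc (0:ℝ) 1 zero_le_one (r p) :=
        continuous_projIcc.comp hr
      fun_prop
    · have : Continuous fun p => Set.projIcc (0:ℝ) 1 zero_le_one (-r p) :=
        continuous_projIcc.comp hr.neg
      exact h.hom.continuous.comp (by fun_prop)
    · intro p hp
      rw [← hp, neg_zero, Set.projIcc_left]
      exact hH' p.1.1
  refine ⟨TopCat.ofHom (ContinuousMap.curry ⟨c, hc⟩), ?_, ?_, ?_⟩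
  · ext p
    obtain ⟨y, s⟩ := p
    show c ((y, s), 0) = h (y, s)
    have e : r ((y, s), 0) = -s := by simp [r]
    simp only [c, e, neg_neg, Set.projIcc_val]
    split_ifs with hs
    · have : s = 0 := Subtype.ext (le_antisymm (by simpa using hs) s.2.1)
      subst this
      simp only [Set.Icc.coe_zero, neg_zero, Set.projIcc_left]
      exact hH' y
    · rfl
  · ext y t
    show c ((y, 0), t) = _
    have e : r ((y, 0), t) = t := by simp [r]
    simp only [c, e, Set.projIcc_val, if_pos t.2.1]
  · ext y t
    show c ((y, 1), t) = h (y, 1)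
    have e : r ((y, 1), t) = -1 := by simp [r]
    simp only [c, e, neg_neg, Set.projIcc_right]
    rw [if_neg (by norm_num)]
    rfl

theorem cyl_ext1 (Y Z : TopCat.{0}) (h : Cyl Y ⟶ Z) (H : Y ⟶ PS Z)
    (hH : H ≫ ev Z 0 = sl Y 1 ≫ h) :
    ∃ G : Cyl Y ⟶ PS Z, G ≫ ev Z 0 = h ∧ sl Y 1 ≫ G = H ∧ sl Y 0 ≫ G = sl Y 0 ≫ h ≫ cst Z := by
  obtain ⟨G, h0, h1, h2⟩ := cyl_ext0 Y Z (cfl Y ≫ h) H (by rw [reassoc_of% (sl0_cfl Y), hH])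
  refine ⟨cfl Y ≫ G, ?_, ?_, ?_⟩
  · rw [Category.assoc, h0, reassoc_of% (cfl_cfl Y)]
  · rw [reassoc_of% (sl1_cfl Y), h1]
  · rw [reassoc_of% (sl0_cfl Y), h2, Category.assoc, reassoc_of% (sl1_cfl Y)]

theorem cof_sl0 (Y : TopCat.{0}) : Cof (sl Y 0) := fun Z h H hH => by
  obtain ⟨G, h0, h1, -⟩ := cyl_ext0 Y Z h H hH
  exact ⟨G, h0, h1⟩

theorem cof_sl1 (Y : TopCat.{0}) : Cof (sl Y 1) := fun Z h H hH => by
  obtain ⟨G, h0, h1, -⟩ := cyl_ext1 Y Z h H hH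
  exact ⟨G, h0, h1⟩

/-- Mapping cylinder glued at time `0`: the free end is a cofibration. -/
theorem cof_free1 {Y W M : TopCat.{0}} {f : Y ⟶ W} {a : Cyl Y ⟶ M} {b : W ⟶ M}
    (hM : IsPushout (sl Y 0) f a b) : Cof (sl Y 1 ≫ a) := by
  intro Z h H hH
  obtain ⟨G, h0, h1, h2⟩ := cyl_ext1 Y Z (a ≫ h) H (by simpa using hH)
  refine ⟨hM.desc G (b ≫ h ≫ cst Z) ?_, ?_, ?_⟩
  · rw [h2, Category.assoc, hM.w_assoc]
  · apply hM.hom_ext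
    · simp [h0]
    · simp [cst_ev]
  · simp [h1]

theorem cof_free0 {Y W M : TopCat.{0}} {f : Y ⟶ W} {a : Cyl Y ⟶ M} {b : W ⟶ M}
    (hM : IsPushout (sl Y 1) f a b) : Cof (sl Y 0 ≫ a) := by
  intro Z h H hH
  obtain ⟨G, h0, h1, h2⟩ := cyl_ext0 Y Z (a ≫ h) H (by simpa using hH)
  refine ⟨hM.desc G (b ≫ h ≫ cst Z) ?_, ?_, ?_⟩
  · rw [h2, Category.assoc, hM.w_assoc]
  · apply hM.hom_ext
    · simp [h0]
    · simp [cst_ev]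
  · simp [h1]

/-- Left properness: the pushout of a homotopy equivalence along a cofibration. -/
theorem left_proper {Y W Y' P : TopCat.{0}} {i : Y ⟶ W} {f : Y ⟶ Y'} {inl : W ⟶ P} {inr : Y' ⟶ P}
    (hP : IsPushout i f inl inr) (hi : Cof i) (hf : IsHomotopyEquivMap f.hom) :
    IsHomotopyEquivMap inl.hom := by
  -- mapping cylinder of `f`
  have hMf := IsPushout.of_hasPushout (sl Y 1) f
  set a := pushout.inl (sl Y 1) f
  set b := pushout.inr (sl Y 1) f
  let pr := hMf.desc (cpr Y ≫ f) (𝟙 Y') (by rw [← Category.assoc, sl_cpr]; simp)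
  have hb : IsHomotopyEquivMap b.hom := triv_cof hMf (cof_sl1 Y) (he_sl Y 1)
  have hpr : IsHomotopyEquivMap pr.hom :=
    he_of_left b pr hb (by rw [hMf.inr_desc]; exact he_id _)
  have hj : IsHomotopyEquivMap (sl Y 0 ≫ a).hom := by
    refine he_of_right _ pr hpr ?_
    rw [Category.assoc, hMf.inl_desc, ← Category.assoc, sl_cpr, Category.id_comp]
    exact hf
  have cj : Cof (sl Y 0 ≫ a) := cof_free0 hMf
  -- mapping cylinder of `i`
  have hMi := IsPushout.of_hasPushout (sl Y 0) i
  set c := pushout.inl (sl Y 0) i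
  set d := pushout.inr (sl Y 0) i
  let q := hMi.desc (cpr Y ≫ i) (𝟙 W) (by rw [← Category.assoc, sl_cpr]; simp)
  have hd : IsHomotopyEquivMap d.hom := triv_cof hMi (cof_sl0 Y) (he_sl Y 0)
  have hq : IsHomotopyEquivMap q.hom :=
    he_of_left d q hd (by rw [hMi.inr_desc]; exact he_id _)
  have hdq : d ≫ q = 𝟙 W := hMi.inr_desc _ _ _
  have hkq : (sl Y 1 ≫ c) ≫ q = i := by
    rw [Category.assoc, hMi.inl_desc, ← Category.assoc, sl_cpr, Category.id_comp]
  have ck : Cof (sl Y 1 ≫ c) := cof_free1 hMi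
  -- the double mapping cylinder
  have hQ := IsPushout.of_hasPushout (sl Y 1 ≫ c) f
  set u := pushout.inl (sl Y 1 ≫ c) f
  set v := pushout.inr (sl Y 1 ≫ c) f
  let θ := hQ.desc (q ≫ inl) inr (by rw [← Category.assoc, hkq, hP.w])
  have hθ : IsHomotopyEquivMap θ.hom :=
    glue_under hQ hP ck hi q hkq hq θ (hQ.inl_desc _ _ _) (hQ.inr_desc _ _ _)
  -- the double mapping cylinder, the other way
  have hQ2 := IsPushout.of_left' hQ hMf
  have hQ3 := hMi.paste_horiz hQ2.flip
  have hdu : IsHomotopyEquivMap (d ≫ u).hom := triv_cof hQ3 cj hj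
  have e : (d ≫ u) ≫ θ = inl := by
    rw [Category.assoc, hQ.inl_desc, reassoc_of% hdq]
  rw [← e]
  exact he_comp _ _ hdu hθ

theorem gluing {A X Y A' X' Y' P P' : TopCat.{0}} {i : A ⟶ X} {f : A ⟶ Y} {i' : A' ⟶ X'}
    {f' : A' ⟶ Y'} {inl : X ⟶ P} {inr : Y ⟶ P} {inl' : X' ⟶ P'} {inr' : Y' ⟶ P'}
    (hP : IsPushout i f inl inr) (hP' : IsPushout i' f' inl' inr') (hi : Cof i) (hi' : Cof i')
    (φX : X ⟶ X') (φA : A ⟶ A') (φY : Y ⟶ Y')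
    (hφX : IsHomotopyEquivMap φX.hom) (hφA : IsHomotopyEquivMap φA.hom)
    (hφY : IsHomotopyEquivMap φY.hom) (hcX : i ≫ φX = φA ≫ i') (hcY : f ≫ φY = φA ≫ f')
    (φ : P ⟶ P') (hl : inl ≫ φ = φX ≫ inl') (hr : inr ≫ φ = φY ≫ inr') :
    IsHomotopyEquivMap φ.hom := by
  have hS := IsPushout.of_hasPushout i φA
  set s₁ := pushout.inl i φA
  set s₂ := pushout.inr i φA
  have he₁ : IsHomotopyEquivMap s₁.hom := left_proper hS hi hφA
  let g := hS.desc φX i' hcX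
  have hg₁ : s₁ ≫ g = φX := hS.inl_desc _ _ _
  have hg₂ : s₂ ≫ g = i' := hS.inr_desc _ _ _
  have heg : IsHomotopyEquivMap g.hom := he_of_left s₁ g he₁ (by rw [hg₁]; exact hφX)
  have cs : Cof s₂ := cof_pushout hS hi
  have hR := IsPushout.of_hasPushout s₂ f'
  set a := pushout.inl s₂ f'
  set b := pushout.inr s₂ f'
  let θ := hR.desc (g ≫ inl') inr' (by rw [reassoc_of% hg₂, hP'.w])
  have haθ : a ≫ θ = g ≫ inl' := hR.inl_desc _ _ _
  have hbθ : b ≫ θ = inr' := hR.inr_desc _ _ _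
  have hθ : IsHomotopyEquivMap θ.hom := glue_under hR hP' cs hi' g hg₂ heg θ haθ hbθ
  have hR2 : IsPushout i (f ≫ φY) (s₁ ≫ a) b := by
    rw [hcY]
    exact hS.paste_vert hR
  have hR3 := IsPushout.of_top' hR2 hP
  set m := hP.desc (s₁ ≫ a) (φY ≫ b) (by rw [hR2.w, Category.assoc])
  have hm : IsHomotopyEquivMap m.hom := left_proper hR3 (cof_pushout hP hi) hφY
  have e : m ≫ θ = φ := by
    apply hP.hom_ext
    · rw [hP.inl_desc_assoc, Category.assoc, haθ, reassoc_of% hg₁, hl]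
    · rw [hP.inr_desc_assoc, Category.assoc, hbθ, hr]
  rw [← e]
  exact he_comp _ _ hm hθ

theorem adj_isPushout {A X Y : Type} [TopologicalSpace A] [TopologicalSpace X]
    [TopologicalSpace Y] (i : C(A, X)) (f : C(A, Y)) :
    IsPushout (TopCat.ofHom i) (TopCat.ofHom f)
      (TopCat.ofHom (Y := AdjSpace i f) ⟨fun x => Quot.mk _ (Sum.inl x), by fun_prop⟩)
      (TopCat.ofHom (Y := AdjSpace i f) ⟨fun y => Quot.mk _ (Sum.inr y), by fun_prop⟩) := by
  refine ⟨⟨?_⟩, ⟨PushoutCocone.IsColimit.mk _ (fun s => TopCat.ofHom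
    ⟨Quot.lift (Sum.elim s.inl s.inr) ?_, ?_⟩) ?_ ?_ ?_⟩⟩
  · ext a
    exact Quot.sound ⟨a, rfl, rfl⟩
  · rintro _ _ ⟨a, rfl, rfl⟩
    exact ConcreteCategory.congr_hom s.condition a
  · exact continuous_quot_lift _ (by fun_prop)
  · intro s; rfl
  · intro s; rfl
  · intro s m h1 h2
    ext p
    induction p using Quot.ind with
    | mk p =>
      cases p with
      | inl x => exact ConcreteCategory.congr_hom h1 x
      | inr y => exact ConcreteCategory.congr_hom h2 y

end GluingAux

/-- given a commutative diagram with closed cofibrations `i : A ↪ X`,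
`i' : A' ↪ X'`, continuous maps `f : A → Y`, `f' : A' → Y'`, and vertical homotopy
equivalences `φ_X, φ_A, φ_Y`, the induced map `φ : X ∪_f Y → X' ∪_{f'} Y'` is a
homotopy equivalence. -/
theorem adjInducedMap_homotopyEquiv {A X Y A' X' Y' : Type}
    [TopologicalSpace A] [TopologicalSpace X] [TopologicalSpace Y]
    [TopologicalSpace A'] [TopologicalSpace X'] [TopologicalSpace Y']
    (i : A → X) (i' : A' → X') (f : C(A, Y)) (f' : C(A', Y'))
    (hi : IsClosedCofibration i) (hi' : IsClosedCofibration i')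
    (φX : C(X, X')) (φA : C(A, A')) (φY : C(Y, Y'))
    (hφX : IsHomotopyEquivMap φX) (hφA : IsHomotopyEquivMap φA)
    (hφY : IsHomotopyEquivMap φY)
    (hcX : ∀ a, φX (i a) = i' (φA a)) (hcY : ∀ a, φY (f a) = f' (φA a)) :
    ∃ φ : C(AdjSpace i ⇑f, AdjSpace i' ⇑f'),
      ⇑φ = adjInducedMap i ⇑f i' ⇑f' ⇑φX ⇑φA ⇑φY hcX hcY ∧ IsHomotopyEquivMap φ := by
  let I : C(A, X) := ⟨i, hi.1.continuous⟩
  let I' : C(A', X') := ⟨i', hi'.1.continuous⟩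
  have hP := GluingAux.adj_isPushout I f
  have hP' := GluingAux.adj_isPushout I' f'
  have hφ : Continuous (adjInducedMap i ⇑f i' ⇑f' ⇑φX ⇑φA ⇑φY hcX hcY) := by
    refine continuous_quot_lift _ ?_
    exact continuous_quot_mk.comp (φX.continuous.sumMap φY.continuous)
  refine ⟨⟨_, hφ⟩, rfl, ?_⟩
  exact GluingAux.gluing hP hP' (GluingAux.cof_of_hep _ hi.2) (GluingAux.cof_of_hep _ hi'.2)
    (TopCat.ofHom φX) (TopCat.ofHom φA) (TopCat.ofHom φY) hφX hφA hφY
    (by ext a; exact hcX a) (by ext a; exact hcY a) (TopCat.ofHom ⟨_, hφ⟩) rfl rfl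
end

section
/- Let K be a finite simplicial complex with vertex set V partitioned into disjoint subsets V_1, …, V_k, let 𝒦 be its geometric realization, let 𝒦̄ be the quotient space obtained by collapsing each V_j to a single point, and let 𝒦̃ = 𝒦 ∪ S be the simplicial complex obtained by attaching, for each j, a cone point z_j joined by edges to all points of V_j (so that the cones S_1, …, S_k are pairwise disjoint). Then 𝒦̄ and 𝒦̃ are homotopy equivalent. -/
open Set Topology unitInterval in
lemma aux_paste {Y Z : Type*} [TopologicalSpace Y] [TopologicalSpace Z] {k : ℕ}
    (A : Set Y) (B : Fin k → Set Y) (hA : IsClosed A) (hB : ∀ j, IsClosed (B j))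
    (hcov : ∀ y, y ∈ A ∨ ∃ j, y ∈ B j) (g : Y → Z)
    (hgA : ContinuousOn g A) (hgB : ∀ j, ContinuousOn g (B j)) : Continuous g := by
  have h2 : ContinuousOn g (⋃ j, B j) :=
    (locallyFinite_of_finite B).continuousOn_iUnion hB hgB
  have h3 := hgA.union_of_isClosed h2 hA (isClosed_iUnion_of_finite hB)
  rw [← continuousOn_univ]
  refine h3.mono fun y _ => ?_
  simpa using hcov y

open Set Topology unitInterval in
lemma aux_abs {E : Type*} [TopologicalSpace E] {k : ℕ} (X X' : Set E) (V S : Fin k → Set E)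
    (z : Fin k → E) (hVX : ∀ j, V j ⊆ X) (hVS : ∀ j, V j ⊆ S j) (hVne : ∀ j, (V j).Nonempty)
    (hXX' : X' = X ∪ ⋃ j, S j) (hX : IsClosed X) (hS : ∀ j, IsClosed (S j))
    (hSX : ∀ j, ∀ y ∈ S j, y ∈ X → y ∈ V j)
    (hSS : ∀ i j, ∀ y, y ∈ S i → y ∈ S j → i = j)
    (F : E × I → E) (hF : Continuous F) (hFm : ∀ x ∈ X, ∀ t, F (x, t) ∈ X')
    (hF0 : ∀ x ∈ X, F (x, 0) = x)
    (C : Fin k → E × I → E) (hC : ∀ j, Continuous (C j)) (hCm : ∀ j, ∀ y ∈ S j, ∀ t, C j (y, t) ∈ S j)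
    (hC0 : ∀ j, ∀ y ∈ S j, C j (y, 0) = y) (hC1 : ∀ j, ∀ y ∈ S j, C j (y, 1) = z j)
    (hFC : ∀ j, ∀ v ∈ V j, ∀ t, F (v, t) = C j (v, t)) :
    Nonempty (ContinuousMap.HomotopyEquiv
      (Quot (fun a b : X => ∃ j, (a : E) ∈ V j ∧ (b : E) ∈ V j)) X') := by
  set r : X → X → Prop := fun a b : X => ∃ j, (a : E) ∈ V j ∧ (b : E) ∈ V j with hr
  have hXsub : X ⊆ X' := by rw [hXX']; exact subset_union_left
  have hSsub : ∀ j, S j ⊆ X' := fun j => by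
    rw [hXX']; exact (subset_iUnion S j).trans subset_union_right
  have hcov : ∀ y : X', (y : E) ∈ X ∨ ∃ j, (y : E) ∈ S j := by
    rintro ⟨y, hy⟩; rw [hXX'] at hy; simpa using hy
  have hg : ∀ y : X', ∃ p : Quot r, (∀ h : (y : E) ∈ X, p = Quot.mk r ⟨y, h⟩) ∧
      ∀ j v, ∀ hv : v ∈ V j, (y : E) ∈ S j → p = Quot.mk r ⟨v, hVX j hv⟩ := by
    intro y
    by_cases hy : (y : E) ∈ X
    · exact ⟨Quot.mk r ⟨y, hy⟩, fun _ => rfl, fun j v hv hyS =>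
        Quot.sound ⟨j, hSX j _ hyS hy, hv⟩⟩
    · obtain ⟨i, hi⟩ := (hcov y).resolve_left hy
      obtain ⟨w, hw⟩ := hVne i
      refine ⟨Quot.mk r ⟨w, hVX i hw⟩, fun h => absurd h hy, fun j v hv hyS => ?_⟩
      obtain rfl := hSS i j _ hi hyS
      exact Quot.sound ⟨i, hw, hv⟩
  choose g hgX hgS using hg
  have hgc : Continuous g := by
    refine aux_paste (Subtype.val ⁻¹' X) (fun j => Subtype.val ⁻¹' S j)
      (hX.preimage continuous_subtype_val) (fun j => (hS j).preimage continuous_subtype_val)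
      hcov g ?_ ?_
    · rw [continuousOn_iff_continuous_domRestrict]
      have : (Subtype.val ⁻¹' X).domRestrict g =
          fun y : (Subtype.val ⁻¹' X : Set X') => Quot.mk r ⟨y.1.1, y.2⟩ := by
        funext y; exact hgX y.1 y.2
      rw [this]
      exact continuous_quot_mk.comp (by fun_prop)
    · intro j
      obtain ⟨v, hv⟩ := hVne j
      exact continuousOn_const.congr fun y hy => hgS y j v hv hy
  have hH : ∀ y : X' × I, ∃ p : X', ((y.1 : E) ∈ X → (p : E) = F (y.1, y.2)) ∧
      ∀ j, (y.1 : E) ∈ S j → (p : E) = C j (y.1, y.2) := by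
    rintro ⟨y, t⟩
    by_cases hy : (y : E) ∈ X
    · refine ⟨⟨F (y, t), hFm _ hy t⟩, fun _ => rfl, fun j hyS => hFC j _ (hSX j _ hyS hy) t⟩
    · obtain ⟨i, hi⟩ := (hcov y).resolve_left hy
      refine ⟨⟨C i (y, t), hSsub i (hCm i _ hi t)⟩, fun h => absurd h hy, fun j hyS => ?_⟩
      obtain rfl := hSS i j _ hi hyS
      rfl
  choose H hHX hHS using hH
  have hHc : Continuous H := by
    rw [continuous_induced_rng]
    refine aux_paste {y : X' × I | (y.1 : E) ∈ X} (fun j => {y : X' × I | (y.1 : E) ∈ S j})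
      (hX.preimage (by fun_prop)) (fun j => (hS j).preimage (by fun_prop))
      (fun y => hcov y.1) _ ?_ ?_
    · refine ContinuousOn.congr (f := fun y : X' × I => F (y.1, y.2)) ?_ fun y hy => hHX y hy
      exact Continuous.continuousOn (by fun_prop)
    · intro j
      refine ContinuousOn.congr (f := fun y : X' × I => C j (y.1, y.2)) ?_ fun y hy => hHS y j hy
      exact Continuous.continuousOn (by fun_prop)
  have hH0 : ∀ y, H (y, 0) = y := by
    intro y
    rcases hcov y with hy | ⟨j, hy⟩
    · exact Subtype.ext ((hHX (y, 0) hy).trans (hF0 _ hy))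
    · exact Subtype.ext ((hHS (y, 0) j hy).trans (hC0 j _ hy))
  have hH1 : ∀ j, ∀ y : X', (y : E) ∈ S j → (H (y, 1) : E) = z j := fun j y hy =>
    (hHS (y, 1) j hy).trans (hC1 j _ hy)
  let i : X → X' := fun x => ⟨x, hXsub x.2⟩
  have hi : Continuous i := by fun_prop
  let f0 : X → X' := fun x => H (i x, 1)
  have hf0 : Continuous f0 := by fun_prop
  have hf0r : ∀ a b, r a b → f0 a = f0 b := by
    rintro a b ⟨j, ha, hb⟩
    exact Subtype.ext ((hH1 j (i a) (hVS j ha)).trans (hH1 j (i b) (hVS j hb)).symm)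
  let f : C(Quot r, X') := ⟨Quot.lift f0 hf0r, continuous_quot_lift hf0r hf0⟩
  let g' : C(X', Quot r) := ⟨g, hgc⟩
  let G : C(X × I, Quot r) := ⟨fun p => g (H (i p.1, p.2)), by fun_prop⟩
  have hGr : ∀ a b, r a b → G.curry a = G.curry b := by
    rintro a b ⟨j, ha, hb⟩
    ext t
    have h1 : ∀ c : X, (c : E) ∈ V j → (H (i c, t) : E) ∈ S j := fun c hc => by
      rw [hHS (i c, t) j (hVS j hc)]
      exact hCm j _ (hVS j hc) t
    change g (H (i a, t)) = g (H (i b, t))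
    rw [hgS _ j a ha (h1 a ha), hgS _ j a ha (h1 b hb)]
  let Gq : C(Quot r, C(I, Quot r)) :=
    ⟨Quot.lift G.curry hGr, continuous_quot_lift hGr G.curry.continuous⟩
  have hGq := ContinuousMap.continuous_uncurry_of_continuous Gq
  refine ⟨⟨f, g', ?_, ?_⟩⟩
  · refine ContinuousMap.Homotopic.symm ⟨⟨⟨fun p => Gq p.2 p.1, hGq.comp continuous_swap⟩, ?_, ?_⟩⟩
    · intro q
      induction q using Quot.ind with
      | mk x =>
        change g (H (i x, 0)) = Quot.mk r x
        rw [hH0, hgX (i x) x.2]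
    · intro q
      induction q using Quot.ind with
      | mk x => rfl
  · refine ContinuousMap.Homotopic.symm ⟨⟨⟨fun p => H (p.2, p.1), by fun_prop⟩, ?_, ?_⟩⟩
    · intro y; exact hH0 y
    · intro y
      change H (y, 1) = f (g y)
      rcases hcov y with hy | ⟨j, hy⟩
      · rw [hgX y hy]; rfl
      · obtain ⟨v, hv⟩ := hVne j
        rw [hgS y j v hv hy]
        change H (y, 1) = H (i ⟨v, _⟩, 1)
        exact Subtype.ext ((hH1 j y hy).trans (hH1 j (i ⟨v, _⟩) (hVS j hv)).symm)

open Filter Topology in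
lemma aux_eps {E : Type*} [NormedAddCommGroup E] [NormedSpace ℝ E]
    (K : Geometry.SimplicialComplex ℝ E) (hfin : K.faces.Finite) (hvf : K.vertices.Finite) :
    ∃ ε > 0, (∀ v ∈ K.vertices, ∀ x ∈ K.space, dist x v < ε → ∀ a : ℝ, 0 ≤ a → a ≤ 1 →
      x + (-a) • (x - v) ∈ K.space) ∧
      ∀ v ∈ K.vertices, ∀ w ∈ K.vertices, ∀ x, dist x v < ε → dist x w < ε → v = w := by
  have h1 : ∀ᶠ ε in 𝓝[>] (0 : ℝ), ∀ v ∈ K.vertices, ∀ s ∈ K.faces, v ∉ s →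
      ∀ x ∈ convexHull ℝ (s : Set E), ε ≤ dist x v := by
    rw [hvf.eventually_all]
    intro v hv
    rw [hfin.eventually_all]
    intro s hs
    by_cases hvs : v ∈ s
    · exact Eventually.of_forall fun ε h => absurd hvs h
    · have hn : v ∉ convexHull ℝ (s : Set E) := by
        rwa [Geometry.SimplicialComplex.vertex_mem_convexHull_iff hv hs]
      have hc : IsClosed (convexHull ℝ (s : Set E)) :=
        (Set.Finite.isCompact_convexHull ℝ s.finite_toSet).isClosed
      obtain ⟨δ, hδ, hb⟩ := Metric.isOpen_iff.1 hc.isOpen_compl v hn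
      filter_upwards [Ioo_mem_nhdsGT hδ] with ε hε _ x hx
      by_contra hlt
      exact hb (show x ∈ Metric.ball v δ from (not_le.1 hlt).trans hε.2) hx
  have h2 : ∀ᶠ ε in 𝓝[>] (0 : ℝ), ∀ v ∈ K.vertices, ∀ w ∈ K.vertices, v ≠ w →
      2 * ε ≤ dist v w := by
    rw [hvf.eventually_all]
    intro v hv
    rw [hvf.eventually_all]
    intro w hw
    by_cases hvs : v = w
    · exact Eventually.of_forall fun ε h => absurd hvs h
    · have : 0 < dist v w / 2 := by have := dist_pos.2 hvs; positivity
      filter_upwards [Ioo_mem_nhdsGT this] with ε hε _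
      linarith [hε.2]
  obtain ⟨ε, ⟨ha, hb⟩, hε⟩ := ((h1.and h2).and self_mem_nhdsWithin).exists
  refine ⟨ε, hε, ?_, ?_⟩
  · intro v hv x hx hxv a ha0 ha1
    obtain ⟨s, hs, hxs⟩ := Geometry.SimplicialComplex.mem_space_iff.1 hx
    have hvs : v ∈ s := by
      by_contra h
      exact absurd (ha v hv s hs h x hxs) (not_le.2 hxv)
    have := (convex_convexHull ℝ (s : Set E)) hxs (subset_convexHull ℝ _ hvs)
      (sub_nonneg.2 ha1) ha0 (by ring)
    refine Geometry.SimplicialComplex.convexHull_subset_space hs ?_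
    convert this using 1
    module
  · intro v hv w hw x h3 h4
    by_contra hne
    have := hb v hv w hw hne
    have := dist_triangle_left v w x
    linarith


open scoped Classical in
/-- let `K` be a finite simplicial complex with vertex set partitioned as
`V = ⊔_j V_j`, let `𝒦̄` be the quotient of its realization `𝒦 = K.space` collapsing each
`V j` to a point, and let `K'` (the complex `𝒦̃ = 𝒦 ∪ S`) be obtained from `K` by attaching,
for each `j`, a cone point `z j` joined by edges to all points of `V j` (the cones being
pairwise disjoint and meeting `𝒦` only in `V j`, as enforced by `K'` being a simplicial
complex on new vertices `z j`). Then `𝒦̄` and `𝒦̃` are homotopy equivalent. -/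
theorem quotient_homotopyEquiv_cone {m k : ℕ}
    (K K' : Geometry.SimplicialComplex ℝ (EuclideanSpace ℝ (Fin m)))
    (hfin : K.faces.Finite)
    (V : Fin k → Set (EuclideanSpace ℝ (Fin m)))
    (hpart : K.vertices = ⋃ j, V j)
    (hdisj : Pairwise (Function.onFun Disjoint V))
    (hVne : ∀ j, (V j).Nonempty)
    (z : Fin k → EuclideanSpace ℝ (Fin m))
    (hzinj : Function.Injective z) (hznew : ∀ j, z j ∉ K.space)
    (hfaces : K'.faces = K.faces ∪ Set.range (fun j => ({z j} : Finset (EuclideanSpace ℝ (Fin m))))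
      ∪ {s : Finset (EuclideanSpace ℝ (Fin m)) | ∃ j, ∃ v ∈ V j, s = {v, z j}}) :
    Nonempty (ContinuousMap.HomotopyEquiv
      (Quot (fun a b : K.space => ∃ j, (a : EuclideanSpace ℝ (Fin m)) ∈ V j ∧
        (b : EuclideanSpace ℝ (Fin m)) ∈ V j))
      K'.space) := by
  classical
  have hvf : K.vertices.Finite := by
    rw [Geometry.SimplicialComplex.vertices_eq]
    exact hfin.biUnion fun s _ => s.finite_toSet
  have hVv : ∀ j, V j ⊆ K.vertices := fun j => by rw [hpart]; exact Set.subset_iUnion V j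
  have hVX : ∀ j, V j ⊆ K.space := fun j =>
    (hVv j).trans Geometry.SimplicialComplex.vertices_subset_space
  have hVf : ∀ j, (V j).Finite := fun j => hvf.subset (hVv j)
  have hVuniq : ∀ i j v, v ∈ V i → v ∈ V j → i = j := by
    intro i j v hi hj
    by_contra hne
    exact Set.disjoint_left.1 (hdisj hne) hi hj
  obtain ⟨ε, hε, hseg, hsep⟩ := aux_eps K hfin hvf
  have hfK : ∀ s ∈ K.faces, s ∈ K'.faces := fun s hs => by
    rw [hfaces]; exact Or.inl (Or.inl hs)
  have hfe : ∀ j, ∀ v ∈ V j, ({v, z j} : Finset (EuclideanSpace ℝ (Fin m))) ∈ K'.faces :=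
    fun j v hv => by rw [hfaces]; exact Or.inr ⟨j, v, hv, rfl⟩
  let S : Fin k → Set (EuclideanSpace ℝ (Fin m)) := fun j => ⋃ v ∈ V j, segment ℝ v (z j)
  have hSmem : ∀ j y, y ∈ S j ↔ ∃ v ∈ V j, y ∈ segment ℝ v (z j) := fun j y => by simp [S]
  have hXX' : K'.space = K.space ∪ ⋃ j, S j := by
    ext y
    simp only [Set.mem_union, Set.mem_iUnion, hSmem, Geometry.SimplicialComplex.mem_space_iff]
    constructor
    · rintro ⟨s, hs, hy⟩
      rw [hfaces] at hs
      rcases hs with (hs | ⟨j, rfl⟩) | ⟨j, v, hv, rfl⟩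
      · exact Or.inl ⟨s, hs, hy⟩
      · obtain ⟨v, hv⟩ := hVne j
        have : y = z j := by simpa using hy
        exact Or.inr ⟨j, v, hv, this ▸ right_mem_segment ℝ _ _⟩
      · exact Or.inr ⟨j, v, hv, by simpa [convexHull_pair] using hy⟩
    · rintro (⟨s, hs, hy⟩ | ⟨j, v, hv, hy⟩)
      · exact ⟨s, hfK s hs, hy⟩
      · exact ⟨_, hfe j v hv, by simpa [convexHull_pair] using hy⟩
  have hX : IsClosed K.space :=
    hfin.isClosed_biUnion fun s _ => (Set.Finite.isCompact_convexHull ℝ s.finite_toSet).isClosed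
  have hS : ∀ j, IsClosed (S j) := fun j =>
    (hVf j).isClosed_biUnion fun v _ => by
      rw [← convexHull_pair]
      exact (Set.Finite.isCompact_convexHull ℝ (Set.toFinite _)).isClosed
  have hSX : ∀ j, ∀ y ∈ S j, y ∈ K.space → y ∈ V j := by
    intro j y hy hyX
    obtain ⟨v, hv, hy⟩ := (hSmem j y).1 hy
    obtain ⟨s, hs, hys⟩ := Geometry.SimplicialComplex.mem_space_iff.1 hyX
    have h := K'.inter_subset_convexHull (hfe j v hv) (hfK s hs)
      ⟨by simpa [convexHull_pair] using hy, hys⟩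
    have hsub : ((({v, z j} : Finset (EuclideanSpace ℝ (Fin m))) : Set _) ∩ s) ⊆ {v} := by
      rintro w ⟨hw, hws⟩
      simp only [Finset.coe_insert, Finset.coe_singleton, Set.mem_insert_iff,
        Set.mem_singleton_iff] at hw
      rcases hw with rfl | rfl
      · rfl
      · exact absurd (K.subset_space hs hws) (hznew j)
    have := convexHull_mono hsub h
    rw [convexHull_singleton, Set.mem_singleton_iff] at this
    exact this ▸ hv
  have hSS : ∀ i j, ∀ y, y ∈ S i → y ∈ S j → i = j := by
    intro i j y hi hj
    obtain ⟨v, hv, hyv⟩ := (hSmem i y).1 hi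
    obtain ⟨w, hw, hyw⟩ := (hSmem j y).1 hj
    have h := K'.inter_subset_convexHull (hfe i v hv) (hfe j w hw)
      ⟨by simpa [convexHull_pair] using hyv, by simpa [convexHull_pair] using hyw⟩
    obtain ⟨u, hu1, hu2⟩ := convexHull_nonempty_iff.1 ⟨y, h⟩
    simp only [Finset.coe_insert, Finset.coe_singleton, Set.mem_insert_iff,
      Set.mem_singleton_iff] at hu1 hu2
    rcases hu1 with rfl | rfl
    · rcases hu2 with rfl | rfl
      · exact hVuniq _ _ _ hv hw
      · exact absurd (hVX _ hv) (hznew j)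
    · rcases hu2 with h2 | h2
      · exact absurd (h2 ▸ hVX _ hw) (hznew i)
      · exact hzinj h2
  have hZ : ∀ v, ∃ p, ∀ j, v ∈ V j → p = z j := by
    intro v
    by_cases h : ∃ j, v ∈ V j
    · obtain ⟨i, hi⟩ := h
      exact ⟨z i, fun j hj => by rw [hVuniq i j v hi hj]⟩
    · exact ⟨v, fun j hj => absurd ⟨j, hj⟩ h⟩
  choose Z hZ using hZ
  let w : EuclideanSpace ℝ (Fin m) → EuclideanSpace ℝ (Fin m) × unitInterval → ℝ :=
    fun v p => p.2 * max 0 (1 - dist p.1 v / ε)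
  have hwc : ∀ v, Continuous (w v) := fun v => by fun_prop
  have hw0 : ∀ v p, 0 ≤ w v p := fun v p => mul_nonneg p.2.2.1 (le_max_left _ _)
  have hw1 : ∀ v p, w v p ≤ 1 := fun v p => by
    refine mul_le_one₀ p.2.2.2 (le_max_left _ _) (max_le zero_le_one ?_)
    have : 0 ≤ dist p.1 v / ε := by positivity
    linarith
  have hwz : ∀ v p, ε ≤ dist p.1 v → w v p = 0 := fun v p h => by
    have : 1 ≤ dist p.1 v / ε := (one_le_div hε).2 h
    simp only [w]
    rw [max_eq_left (by linarith), mul_zero]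
  let T : EuclideanSpace ℝ (Fin m) → EuclideanSpace ℝ (Fin m) × unitInterval →
      EuclideanSpace ℝ (Fin m) := fun v p =>
    (-(min 1 (2 * w v p))) • (p.1 - v) + (max 0 (2 * w v p - 1)) • (Z v - v)
  have hTc : ∀ v, Continuous (T v) := fun v => by have := hwc v; fun_prop
  have hTz : ∀ v p, w v p = 0 → T v p = 0 := fun v p h => by simp [T, h]
  let F : EuclideanSpace ℝ (Fin m) × unitInterval → EuclideanSpace ℝ (Fin m) := fun p =>
    p.1 + ∑ v ∈ hvf.toFinset, T v p
  have hF : Continuous F := by fun_prop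
  have hF1 : ∀ v ∈ K.vertices, ∀ p : EuclideanSpace ℝ (Fin m) × unitInterval,
      dist p.1 v < ε → F p = p.1 + T v p := by
    intro v hv p hp
    simp only [F]
    rw [Finset.sum_eq_single v]
    · intro u hu huv
      refine hTz u p (hwz u p ?_)
      by_contra hlt
      exact huv (hsep u (hvf.mem_toFinset.1 hu) v hv p.1 (not_le.1 hlt) hp)
    · intro h; exact absurd (hvf.mem_toFinset.2 hv) h
  have hF2 : ∀ p : EuclideanSpace ℝ (Fin m) × unitInterval,
      (∀ v ∈ K.vertices, ε ≤ dist p.1 v) → F p = p.1 := by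
    intro p hp
    simp only [F]
    rw [Finset.sum_eq_zero, add_zero]
    intro v hv
    exact hTz v p (hwz v p (hp v (hvf.mem_toFinset.1 hv)))
  let μ : unitInterval → ℝ := fun t => max 0 (2 * (t : ℝ) - 1)
  have hμ0 : ∀ t, 0 ≤ μ t := fun t => le_max_left _ _
  have hμ1 : ∀ t, μ t ≤ 1 := fun t => max_le zero_le_one (by linarith [t.2.2])
  have hμc : Continuous μ := by fun_prop
  let C : Fin k → EuclideanSpace ℝ (Fin m) × unitInterval → EuclideanSpace ℝ (Fin m) :=
    fun j p => (1 - μ p.2) • p.1 + μ p.2 • z j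
  refine aux_abs K.space K'.space V S z hVX ?_ hVne hXX' hX hS hSX hSS F hF ?_ ?_ C ?_ ?_ ?_ ?_ ?_
  · intro j v hv
    exact (hSmem j v).2 ⟨v, hv, left_mem_segment ℝ _ _⟩
  · intro x hx t
    rw [hXX']
    by_cases hn : ∃ v ∈ K.vertices, dist x v < ε
    · obtain ⟨v, hv, hxv⟩ := hn
      rw [hF1 v hv (x, t) hxv]
      simp only [T]
      rcases le_total (2 * w v (x, t)) 1 with h | h
      · left
        rw [max_eq_left (by linarith), min_eq_right h, zero_smul, add_zero]
        exact hseg v hv x hx hxv _ (by linarith [hw0 v (x, t)]) h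
      · right
        rw [max_eq_right (by linarith), min_eq_left h]
        have hv' := hv
        rw [hpart, Set.mem_iUnion] at hv'
        obtain ⟨j, hj⟩ := hv'
        rw [Set.mem_iUnion]
        refine ⟨j, (hSmem j _).2 ⟨v, hj, ?_⟩⟩
        rw [hZ v j hj]
        refine ⟨1 - (2 * w v (x, t) - 1), 2 * w v (x, t) - 1, ?_, ?_, by ring, ?_⟩
        · linarith [hw1 v (x, t)]
        · linarith
        · module
    · push Not at hn
      rw [hF2 (x, t) hn]
      exact Or.inl hx
  · intro x hx
    simp only [F]
    rw [Finset.sum_eq_zero, add_zero]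
    intro v _
    exact hTz v _ (by simp [w])
  · intro j
    fun_prop
  · intro j y hy t
    obtain ⟨v, hv, hy⟩ := (hSmem j y).1 hy
    refine (hSmem j _).2 ⟨v, hv, ?_⟩
    exact (convex_segment v (z j)) hy (right_mem_segment ℝ _ _) (sub_nonneg.2 (hμ1 t)) (hμ0 t)
      (by ring)
  · intro j y _
    simp [C, μ]
  · intro j y _
    have : μ 1 = 1 := by simp [μ]; norm_num
    simp [C, this]
  · intro j v hv t
    rw [hF1 v (hVv j hv) (v, t) (by simpa using hε)]
    have h1 : w v (v, t) = t := by simp [w]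
    simp only [T, C, h1, hZ v j hv, sub_self, smul_zero, zero_add, μ]
    module
end
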